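/- Let (R, m) be a regular local ring of dimension n containing a field, and let I be a proper ideal of R with ht_R(I) = d. Then dim_R(H_I^d(R)) = n − d. -/

import Mathlib

open CategoryTheory Opposite

noncomputable section

/-- Krull dimension of the support of a module. -/
def moduleSuppDim (R : Type) [CommRing R] (M : Type) [AddCommGroup M] [Module R M] :
    WithBot ℕ∞ :=
  Order.krullDim (Module.support R M)

/-- `M` has injective dimension at most `n` (as `R`-module), characterized by
vanishing of `Ext^i(N, M)` for all `i > n`. -/
def injDimLE (R : Type) [CommRing R] (M : Type) [AddCommGroup M] [Module R M] (n : ℕ) : Prop :=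
  ∀ (N : ModuleCat R) (i : ℕ), n < i →
    Subsingleton (((Ext R (ModuleCat R) i).obj (op N)).obj (ModuleCat.of R M))

/-- The injective dimension of `M` as an `R`-module, valued in `ℕ∞`. -/
def injDim (R : Type) [CommRing R] (M : Type) [AddCommGroup M] [Module R M] : ℕ∞ :=
  sInf {n : ℕ∞ | ∃ m : ℕ, (m : ℕ∞) = n ∧ injDimLE R M m}

/-- The height of an ideal: the infimum of the heights of primes containing it. -/
def idealHeight (R : Type) [CommRing R] (I : Ideal R) : ℕ∞ :=
  sInf {h : ℕ∞ | ∃ p : PrimeSpectrum R, I ≤ p.asIdeal ∧ Order.height p = h}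

/-- A regular local ring: a Noetherian local ring whose maximal ideal can be generated
by `dim R` elements. -/
def IsRegularLocal (R : Type) [CommRing R] [IsLocalRing R] : Prop :=
  IsNoetherianRing R ∧
    ∃ s : Finset R, Ideal.span (s : Set R) = IsLocalRing.maximalIdeal R ∧
      (s.card : WithBot ℕ∞) = ringKrullDim R

/-- A ring contains a field if some subring of it is a field. -/
def ContainsField (R : Type) [CommRing R] : Prop :=
  ∃ k : Subring R, IsField k

/-- The underlying module of the `i`-th local cohomology of `R` with support in `I`. -/
abbrev LocalCohomologyMod (R : Type) [CommRing R] (I : Ideal R) (i : ℕ) : Type :=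
  (localCohomology I i).obj (ModuleCat.of R R)

end

/-!
Since `H_I^d(R)` is supported on `V(I)`, its dimension is at most `dim R/I ≤ n - d`. For the lower
bound let `p ⊇ I` be a prime of height `d`; it is enough to embed `R/p` into `H_I^d(R)` and to see
that `dim R/p = n - d`.

The maximal ideal is generated by a regular sequence of length `n`, so Ischebeck's theorem gives
`Ext^i(N, R) = 0` for `i < n - dim N`. Taking `N = R/I` yields a regular sequence `x₁, …, x_d` in
`I`, and `p`, being minimal over `(x₁, …, x_d)`, is an associated prime of `R/(x₁, …, x_d)`.
Dimension shifting embeds `Hom(R/J, R/(x₁, …, x_d))` into `Ext^d(R/J, R)`, so that `p` is an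
associated prime of `Ext^d(R/J, R)` for every `J ≤ p` containing the sequence. For `J = p` this
`Ext` is therefore nonzero, and Ischebeck's theorem forces `dim R/p ≥ n - d`. For `J = I`,
`Ext^d(R/I, R)` embeds into `H_I^d(R) = colim Ext^d(R/I^t, R)`, because
`Ext^{d-1}(I^t/I^s, R) = 0` makes the transition maps injective.
-/

universe w v u t

noncomputable section

namespace DerivedExt

variable {R : Type t} [Ring R] {C : Type u} [Category.{v} C] [Abelian C] [Linear R C]
  {X Y : C}

theorem extMk_eq_zero_iff_of_zero [HasExt.{w} C] (P : ProjectiveResolution X)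
    (f : P.complex.X 0 ⟶ Y) (m : ℕ) (hm : 0 + 1 = m) (hf : P.complex.d m 0 ≫ f = 0) :
    P.extMk f m hm hf = 0 ↔ f = 0 := by
  refine ⟨fun h ↦ ?_, fun h ↦ by subst h; exact P.extMk_zero m hm⟩
  rw [← P.extEquivCohomologyClass.apply_eq_iff_eq, P.extEquivCohomologyClass_extMk,
    P.extEquivCohomologyClass_zero, CochainComplex.HomComplex.CohomologyClass.mk_eq_zero_iff,
    CochainComplex.HomComplex.Cocycle.toSingleMk_mem_coboundaries_iff _ _ _ _ _ 1 (by simp)] at h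
  obtain ⟨g, hg⟩ := h
  have hd : P.cochainComplex.d (-(0 : ℕ)) 1 = 0 :=
    (P.cochainComplex.isZero_of_isStrictlyLE 0 1).eq_zero_of_tgt _
  rw [← cancel_epi (P.cochainComplexXIso (-(0 : ℕ)) 0 rfl).hom, Limits.comp_zero, ← hg, hd,
    Limits.zero_comp]

variable (R Y) in
/-- The three terms around degree `n` of the complex `Hom(P, Y)`. -/
abbrev homComplex (P : ProjectiveResolution X) (n : ℕ) : ShortComplex (ModuleCat.{v} R) :=
  (P.complex.linearYonedaObj R Y).sc n

variable (R Y) in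
/-- The `n`-cocycles of `Hom(P, Y)`, as a submodule of `P.complex.X n ⟶ Y`. -/
abbrev cocycles (P : ProjectiveResolution X) (n : ℕ) : Submodule R (P.complex.X n ⟶ Y) :=
  LinearMap.ker (homComplex R Y P n).g.hom

variable (R Y) in
/-- The `n`-coboundaries of `Hom(P, Y)`, as a submodule of the cocycles. -/
abbrev coboundaries (P : ProjectiveResolution X) (n : ℕ) : Submodule R (cocycles R Y P n) :=
  LinearMap.range (homComplex R Y P n).moduleCatToCycles

section AbelianExt

variable [HasExt.{w} C] (P : ProjectiveResolution X) (n : ℕ)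

lemma smul_extMk {n : ℕ} (r : R) (f : P.complex.X n ⟶ Y) (m : ℕ) (hm : n + 1 = m)
    (hf : P.complex.d m n ≫ f = 0) :
    r • P.extMk f m hm hf = P.extMk (r • f) m hm (by simp [hf]) := by
  simp [Abelian.Ext.smul_eq_comp_mk₀, P.extMk_comp_mk₀]

/-- The class in `Abelian.Ext X Y n` of a cocycle of `Hom(P, Y)`. -/
def extClass : cocycles R Y P n →ₗ[R] Abelian.Ext X Y n where
  toFun f := P.extMk f.1 _ (CochainComplex.next ℕ n).symm f.2
  map_add' f g := (P.add_extMk f.1 g.1 _ (CochainComplex.next ℕ n).symm f.2 g.2).symm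
  map_smul' r f := (smul_extMk P r f.1 _ (CochainComplex.next ℕ n).symm f.2).symm

lemma extClass_surjective :
    Function.Surjective (extClass P n : cocycles R Y P n →ₗ[R] _) := by
  intro α
  obtain ⟨f, hf, rfl⟩ := P.extMk_surjective α _ (CochainComplex.next ℕ n).symm
  exact ⟨⟨f, hf⟩, rfl⟩

lemma ker_extClass : LinearMap.ker (extClass P n) = coboundaries R Y P n := by
  ext f
  have hf : f ∈ coboundaries R Y P n ↔
      ∃ g, P.complex.d n ((ComplexShape.up ℕ).prev n) ≫ g = f.1 :=
    ⟨fun ⟨g, hg⟩ ↦ ⟨g, congr_arg Subtype.val hg⟩, fun ⟨g, hg⟩ ↦ ⟨g, Subtype.ext hg⟩⟩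
  rw [LinearMap.mem_ker, hf]
  cases n with
  | zero =>
    refine (extMk_eq_zero_iff_of_zero P f.1 _ (CochainComplex.next ℕ 0).symm f.2).trans ?_
    rw [P.complex.shape 0 _ (by simp)]
    simp [eq_comm]
  | succ p => exact P.extMk_eq_zero_iff f.1 _ (CochainComplex.next ℕ (p + 1)).symm f.2 _ (by simp)

/-- `Abelian.Ext X Y n`, computed as the cohomology of `Hom(P, Y)`. -/
def abelianExtEquiv : Abelian.Ext X Y n ≃ₗ[R] cocycles R Y P n ⧸ coboundaries R Y P n :=
  (Submodule.quotEquivOfEq _ _ (ker_extClass P n).symm ≪≫ₗ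
    (extClass P n).quotKerEquivOfSurjective (extClass_surjective P n)).symm

end AbelianExt

/-- The left derived functor `Ext R C n` at `X` and `Y`, computed as the cohomology of
`Hom(P, Y)`. -/
def derivedExtEquiv [EnoughProjectives C] (P : ProjectiveResolution X) (n : ℕ) :
    ((Ext R C n).obj (op X)).obj Y ≃ₗ[R] cocycles R Y P n ⧸ coboundaries R Y P n :=
  (P.isoExt n Y ≪≫ (homComplex R Y P n).moduleCatHomologyIso).toLinearEquiv

variable {X' : C} {P : ProjectiveResolution X} {P' : ProjectiveResolution X'} {f : X ⟶ X'}

variable (Y) in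
/-- Precomposition of cocycles with a morphism of projective resolutions. -/
def precomp (n : ℕ) (φ : ProjectiveResolution.Hom P P' f) :
    cocycles R Y P' n →ₗ[R] cocycles R Y P n :=
  (Linear.leftComp R Y (φ.hom.f n)).restrict fun g (hg : P'.complex.d _ n ≫ g = 0) ↦
    show P.complex.d _ n ≫ φ.hom.f n ≫ g = 0 by rw [← φ.hom.comm_assoc, hg, Limits.comp_zero]

/-- The map of complexes `Hom(P', Y) ⟶ Hom(P, Y)` induced by `φ`. -/
abbrev linearYonedaMap (φ : P.complex ⟶ P'.complex) :
    P'.complex.linearYonedaObj R Y ⟶ P.complex.linearYonedaObj R Y :=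
  (HomologicalComplex.unopFunctor _ _).map
    ((((linearYoneda R C).obj Y).rightOp.mapHomologicalComplex _).map φ).op

lemma homologyMap_unop_comp_homologyUnop_inv {V : Type*} [Category* V] [Abelian V]
    {K L : ChainComplex Vᵒᵖ ℕ} (φ : K ⟶ L) (n : ℕ) :
    (HomologicalComplex.homologyMap φ n).unop ≫ (K.homologyUnop n).inv =
      (L.homologyUnop n).inv ≫ HomologicalComplex.homologyMap
        ((HomologicalComplex.unopFunctor V (ComplexShape.down ℕ)).map φ.op) n :=
  (CommSq.mk (congr_arg Quiver.Hom.unop (HomologicalComplex.homologyOp_hom_naturality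
    ((HomologicalComplex.unopFunctor V (ComplexShape.down ℕ)).map φ.op) n))).horiz_inv.w.symm

lemma isoExt_naturality [EnoughProjectives C] (n : ℕ) (φ : ProjectiveResolution.Hom P P' f) :
    ((Ext R C n).map f.op).app Y ≫ (P.isoExt n Y).hom =
      (P'.isoExt n Y).hom ≫ HomologicalComplex.homologyMap (linearYonedaMap φ.hom) n := by
  let F := ((linearYoneda R C).obj Y).rightOp
  have h : ((F.leftDerived n).map f).unop ≫ (P.isoLeftDerivedObj F n).inv.unop =
      (P'.isoLeftDerivedObj F n).inv.unop ≫
        (HomologicalComplex.homologyMap ((F.mapHomologicalComplex _).map φ.hom) n).unop :=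
    congr_arg Quiver.Hom.unop (ProjectiveResolution.isoLeftDerivedObj_inv_naturality f P P'
      φ.hom (by simpa using φ.hom_f_zero_comp_π_f_zero) F n)
  exact ((CommSq.mk h.symm).horiz_comp
    (CommSq.mk (homologyMap_unop_comp_homologyUnop_inv _ n).symm)).w.symm

lemma derivedExtEquiv_symm_mk [EnoughProjectives C] (n : ℕ) (z : cocycles R Y P n) :
    (derivedExtEquiv P n).symm (Submodule.Quotient.mk z) =
      (P.isoExt n Y).inv ((P.complex.linearYonedaObj R Y).homologyπ n
        ((homComplex R Y P n).moduleCatCyclesIso.inv z)) :=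
  congr_arg (P.isoExt n Y).inv ((homComplex R Y P n).moduleCatCyclesIso_inv_π_apply z).symm

lemma cyclesMap_moduleCatCyclesIso_inv (n : ℕ) (φ : ProjectiveResolution.Hom P P' f)
    (z : cocycles R Y P' n) :
    HomologicalComplex.cyclesMap (linearYonedaMap φ.hom) n
      ((homComplex R Y P' n).moduleCatCyclesIso.inv z) =
    (homComplex R Y P n).moduleCatCyclesIso.inv (precomp Y n φ z) := by
  have hinj := (ModuleCat.mono_iff_injective
    ((P.complex.linearYonedaObj R Y).iCycles n)).1 inferInstance
  apply hinj
  have h := ConcreteCategory.congr_hom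
    (HomologicalComplex.cyclesMap_i (linearYonedaMap (R := R) (Y := Y) φ.hom) n)
      ((homComplex R Y P' n).moduleCatCyclesIso.inv z)
  have h1 := (homComplex R Y P' n).moduleCatCyclesIso_inv_iCycles_apply z
  have h2 := (homComplex R Y P n).moduleCatCyclesIso_inv_iCycles_apply (precomp Y n φ z)
  exact h.trans ((congr_arg ((linearYonedaMap (R := R) (Y := Y) φ.hom).f n) h1).trans h2.symm)

lemma derivedExtEquiv_map [EnoughProjectives C] (n : ℕ) (φ : ProjectiveResolution.Hom P P' f)
    (z : cocycles R Y P' n) :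
    ((Ext R C n).map f.op).app Y ((derivedExtEquiv P' n).symm (Submodule.Quotient.mk z)) =
      (derivedExtEquiv P n).symm (Submodule.Quotient.mk (precomp Y n φ z)) := by
  rw [derivedExtEquiv_symm_mk, derivedExtEquiv_symm_mk, ← cyclesMap_moduleCatCyclesIso_inv]
  have h : (P'.isoExt n Y).inv ≫ ((Ext R C n).map f.op).app Y =
      HomologicalComplex.homologyMap (linearYonedaMap φ.hom) n ≫ (P.isoExt n Y).inv := by
    rw [Iso.inv_comp_eq, ← Category.assoc, Iso.eq_comp_inv, isoExt_naturality]
  refine (ConcreteCategory.congr_hom h _).trans (congr_arg (P.isoExt n Y).inv ?_)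
  exact ConcreteCategory.congr_hom (HomologicalComplex.homologyπ_naturality
    (linearYonedaMap (R := R) (Y := Y) φ.hom) n) _

lemma abelianExtEquiv_map [HasExt.{w} C] (n : ℕ) (φ : ProjectiveResolution.Hom P P' f)
    (z : cocycles R Y P' n) :
    (Abelian.Ext.mk₀ f).comp ((abelianExtEquiv P' n).symm (Submodule.Quotient.mk z)) (zero_add _) =
      (abelianExtEquiv P n).symm (Submodule.Quotient.mk (precomp Y n φ z)) :=
  ProjectiveResolution.mk₀_comp_extMk z.1 _ (CochainComplex.next ℕ n).symm z.2 φ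

variable (R X Y) in
/-- The comparison between the two definitions of `Ext` in the library: the derived functor, by
which local cohomology is defined, and `Abelian.Ext`, for which long exact sequences are
available. -/
def extLinearEquiv [EnoughProjectives C] [HasExt.{w} C] (n : ℕ) :
    ((Ext R C n).obj (op X)).obj Y ≃ₗ[R] Abelian.Ext X Y n :=
  derivedExtEquiv (projectiveResolution X) n ≪≫ₗ (abelianExtEquiv (projectiveResolution X) n).symm

lemma extLinearEquiv_map [EnoughProjectives C] [HasExt.{w} C] (n : ℕ) (f : X ⟶ X')
    (e : ((Ext R C n).obj (op X')).obj Y) :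
    extLinearEquiv R X Y n (((Ext R C n).map f.op).app Y e) =
      (Abelian.Ext.mk₀ f).comp (extLinearEquiv R X' Y n e) (zero_add _) := by
  let P := projectiveResolution X
  let P' := projectiveResolution X'
  let φ : ProjectiveResolution.Hom P P' f :=
    ⟨ProjectiveResolution.lift f P P',
      HomologicalComplex.congr_hom (ProjectiveResolution.lift_commutes f P P') 0⟩
  obtain ⟨z', rfl⟩ := (derivedExtEquiv P' n).symm.surjective e
  obtain ⟨z, rfl⟩ := Submodule.Quotient.mk_surjective _ z'
  simp only [extLinearEquiv]
  rw [derivedExtEquiv_map n φ z]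
  simp only [LinearEquiv.trans_apply, P', P, LinearEquiv.apply_symm_apply,
    abelianExtEquiv_map n φ z]

end DerivedExt

section Ext

open Abelian RingTheory.Sequence
open scoped Pointwise

theorem precomp_mk₀_injective_of_shortExact {C : Type*} [Category* C] [Abelian C] [HasExt.{v} C]
    {S : ShortComplex C} (hS : S.ShortExact) (Y : C) (n : ℕ)
    (h : ∀ i < n, Subsingleton (Ext S.X₁ Y i)) :
    Function.Injective ((Ext.mk₀ S.g).precomp Y (zero_add n)) := by
  cases n with
  | zero =>
    have := hS.epi_g
    exact Ext.precomp_mk₀_injective_of_epi Y S.g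
  | succ n =>
    refine (injective_iff_map_eq_zero _).2 fun x hx ↦ ?_
    obtain ⟨y, rfl⟩ := Ext.contravariant_sequence_exact₃ hS Y x hx (n₀ := n) (by lia)
    have := h n n.lt_succ_self
    rw [Subsingleton.elim y 0, Ext.comp_zero]

variable {R : Type u} [CommRing R]

theorem support_quotient_ideal {R : Type*} [CommRing R] (J : Ideal R) :
    Module.support R (R ⧸ J) = PrimeSpectrum.zeroLocus J := by
  rw [Module.support_eq_zeroLocus, Ideal.annihilator_quotient]

theorem smul_ext_eq_zero_of_mem_annihilator {M N : ModuleCat.{u} R} {n : ℕ} {r : R}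
    (hr : r ∈ Module.annihilator R N) (e : Ext N M n) : r • e = 0 := by
  have h : r • 𝟙 N = 0 := by
    ext x
    exact Module.mem_annihilator.1 hr x
  rw [← Ext.mk₀_id_comp e, ← Ext.smul_comp, ← Ext.mk₀_smul, h, Ext.mk₀_zero, Ext.zero_comp]

theorem smul_top_quotSMulTop_lt_top {M : Type*} [AddCommGroup M] [Module R M] {I : Ideal R} {r : R}
    (hr : r ∈ I) (hI : I • (⊤ : Submodule R M) < ⊤) :
    I • (⊤ : Submodule R (QuotSMulTop r M)) < ⊤ := by
  refine lt_top_iff_ne_top.2 fun h ↦ hI.ne ?_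
  have hle : r • (⊤ : Submodule R M) ≤ I • ⊤ := by
    rw [← Submodule.ideal_span_singleton_smul]
    exact Submodule.smul_mono_left ((Ideal.span_singleton_le_iff_mem I).2 hr)
  have h' := congr_arg (Submodule.comap (r • (⊤ : Submodule R M)).mkQ) h
  rwa [Submodule.comap_smul_top_of_surjective I _ (Submodule.mkQ_surjective _), Submodule.ker_mkQ,
    sup_eq_left.2 hle, Submodule.comap_top] at h'

theorem exists_injective_linearMap_ext_length [IsNoetherianRing R] {I : Ideal R}
    (N : ModuleCat.{u} R) [Module.Finite R N] (hN : Module.support R N ⊆ PrimeSpectrum.zeroLocus I)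
    (rs : List R) (hrs : ∀ r ∈ rs, r ∈ I) (M : ModuleCat.{u} R) [Module.Finite R M]
    (hM : I • (⊤ : Submodule R M) < ⊤) (hreg : IsRegular M rs) :
    ∃ φ : (N →ₗ[R] M ⧸ Ideal.ofList rs • (⊤ : Submodule R M)) →ₗ[R] Ext N M rs.length,
      Function.Injective φ := by
  induction rs generalizing M with
  | nil =>
    have e : (M ⧸ Ideal.ofList [] • (⊤ : Submodule R M)) ≃ₗ[R] M :=
      Submodule.quotEquivOfEqBot _ <|
        (congr_arg (· • ⊤) (Ideal.ofList_nil (R := R))).trans (Submodule.bot_smul _)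
    exact ⟨((LinearEquiv.congrRight e ≪≫ₗ ModuleCat.homLinearEquiv.symm) ≪≫ₗ
      Ext.linearEquiv₀.symm).toLinearMap, LinearEquiv.injective _⟩
  | cons r rs ih =>
    have hr : r ∈ I := hrs r List.mem_cons_self
    have hreg' := (isRegular_cons_iff M r rs).1 hreg
    obtain ⟨φ, hφ⟩ := ih (fun s hs ↦ hrs s (List.mem_cons_of_mem _ hs))
      (ModuleCat.of R (QuotSMulTop r M)) (smul_top_quotSMulTop_lt_top hr hM) hreg'.2
    have hS := hreg'.1.smulShortComplex_shortExact (M := M)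
    let δ : Ext N (ModuleCat.of R (QuotSMulTop r M)) rs.length →ₗ[R] Ext N M (r :: rs).length :=
      hS.extClass.postcompOfLinear R N rfl
    have hδ : Function.Injective δ := by
      refine (injective_iff_map_eq_zero _).2 fun x hx ↦ ?_
      obtain ⟨y, rfl⟩ := Ext.covariant_sequence_exact₃ N hS x rfl hx
      have : Subsingleton (Ext N (M.smulShortComplex r).X₂ rs.length) :=
        ModuleCat.subsingleton_ext_of_exists_isRegular I N hN M hM (r :: rs) hrs hreg _ (by simp)
      exact (congr_arg (Ext.comp · _ _) (Subsingleton.elim y 0)).trans (Ext.zero_comp ..)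
    let e : (N →ₗ[R] M ⧸ Ideal.ofList (r :: rs) • (⊤ : Submodule R M)) ≃ₗ[R]
        (N →ₗ[R] QuotSMulTop r M ⧸ Ideal.ofList rs • (⊤ : Submodule R (QuotSMulTop r M))) :=
      LinearEquiv.congrRight (Submodule.quotOfListConsSMulTopEquivQuotSMulTopInner M r rs)
    exact ⟨δ ∘ₗ φ ∘ₗ e.toLinearMap, hδ.comp (hφ.comp e.injective)⟩

theorem isAssociatedPrime_linearMap_quotient [IsNoetherianRing R] {M : Type*} [AddCommGroup M]
    [Module R M] {I p : Ideal R} (hp : IsAssociatedPrime p M) (hI : I ≤ p) :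
    IsAssociatedPrime p (R ⧸ I →ₗ[R] M) := by
  obtain ⟨hprime, x, hx⟩ := isAssociatedPrime_iff.1 hp
  let f : R ⧸ I →ₗ[R] M := Submodule.liftQ I (LinearMap.toSpanSingleton R M x) fun a ha ↦ by
    simpa [hx, Submodule.mem_colon_singleton] using hI ha
  refine isAssociatedPrime_iff.2 ⟨hprime, f, ?_⟩
  have hf (a : R) : a • f = 0 ↔ a • x = 0 := by
    have hf1 : f 1 = x := one_smul R x
    refine ⟨fun h ↦ ?_, fun h ↦ ?_⟩
    · rw [← hf1, ← LinearMap.smul_apply, h, LinearMap.zero_apply]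
    · exact Submodule.linearMap_qext _ (LinearMap.ext_ring ((congr_arg (a • ·) hf1).trans h))
  ext a
  rw [hx, Submodule.mem_colon_singleton, Submodule.mem_colon_singleton, Submodule.mem_bot,
    Submodule.mem_bot, hf]

theorem isAssociatedPrime_ext_length [IsNoetherianRing R] {I p : Ideal R}
    (rs : List R) (hrs : ∀ r ∈ rs, r ∈ I) (M : ModuleCat.{u} R) [Module.Finite R M]
    (hM : I • (⊤ : Submodule R M) < ⊤) (hreg : IsRegular M rs)
    (hp : IsAssociatedPrime p (M ⧸ Ideal.ofList rs • (⊤ : Submodule R M))) (hI : I ≤ p) :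
    IsAssociatedPrime p (Ext (ModuleCat.of R (R ⧸ I)) M rs.length) := by
  obtain ⟨φ, hφ⟩ := exists_injective_linearMap_ext_length (ModuleCat.of R (R ⧸ I))
    (support_quotient_ideal I).le rs hrs M hM hreg
  exact (isAssociatedPrime_linearMap_quotient hp hI).map_of_injective φ hφ

end Ext

section LocalCohomology

open Abelian RingTheory.Sequence Limits localCohomology

variable {R : Type u} [CommRing R]

theorem precomp_mk₀_injective_of_isRegular [IsNoetherianRing R] {I : Ideal R}
    {N N' : ModuleCat.{u} R} [Module.Finite R N]
    (hN : Module.support R N ⊆ PrimeSpectrum.zeroLocus I) (g : N ⟶ N') [Epi g]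
    {rs : List R} (hrs : ∀ r ∈ rs, r ∈ I) {M : ModuleCat.{u} R} [Module.Finite R M]
    (hM : I • (⊤ : Submodule R M) < ⊤) (hreg : IsRegular M rs) :
    Function.Injective ((Ext.mk₀ g).precomp M (zero_add rs.length)) := by
  have hS := LinearMap.shortExact_shortComplexKer ((ModuleCat.epi_iff_surjective g).1 inferInstance)
  have hker : Module.support R (LinearMap.ker g.hom) ⊆ PrimeSpectrum.zeroLocus I :=
    (Module.support_subset_of_injective _ (Submodule.subtype_injective _)).trans hN
  exact precomp_mk₀_injective_of_shortExact hS M rs.length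
    (ModuleCat.subsingleton_ext_of_exists_isRegular I _ hker M hM rs hrs hreg)

/-- The projection `R ⧸ I ^ s ⟶ R ⧸ I ^ t` for `t ≤ s`. -/
def quotientPowMap (I : Ideal R) {t s : ℕ} (h : t ≤ s) :
    ModuleCat.of R (R ⧸ I ^ s) ⟶ ModuleCat.of R (R ⧸ I ^ t) :=
  ModuleCat.ofHom (Submodule.factor (Ideal.pow_le_pow_right h))

/-- Local cohomology is the filtered colimit of the modules `Ext^n(R ⧸ I ^ t, M)`. -/
def localCohomologyIsColimit (I : Ideal R) (M : ModuleCat.{u} R) (n : ℕ) :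
    have := hasColimitDiagram.{u, 0} (idealPowersDiagram I) n
    IsColimit (((evaluation _ _).obj M).mapCocone
      (colimit.cocone (diagram (idealPowersDiagram I) n))) :=
  have := hasColimitDiagram.{u, 0} (idealPowersDiagram I) n
  isColimitOfPreserves _ (colimit.isColimit _)

theorem exists_map_eq_zero_of_isColimit {J : Type v} [Category.{w} J] [IsFiltered J]
    {F : J ⥤ ModuleCat.{u} R} [PreservesColimit F (forget (ModuleCat.{u} R))] {c : Cocone F}
    (hc : IsColimit c) {i : J} {x : F.obj i} (hx : c.ι.app i x = 0) :
    ∃ (k : J) (f : i ⟶ k), F.map f x = 0 := by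
  obtain ⟨k, f, g, h⟩ :=
    Concrete.isColimit_exists_of_rep_eq F hc x 0 (hx.trans (map_zero (c.ι.app i).hom).symm)
  exact ⟨k, f, h.trans (map_zero (F.map g).hom)⟩

instance preservesFilteredColimitsOfSize_forget_moduleCat :
    PreservesFilteredColimitsOfSize.{0, 0} (forget (ModuleCat.{u} R)) :=
  preservesFilteredColimitsOfSize_shrink.{0, u, 0, u} _

/-- The structure map of the colimit defining local cohomology, from its `t`-th term. -/
def ιLocalCohomology (I : Ideal R) (M : ModuleCat.{u} R) (n t : ℕ) :
    ((Ext R (ModuleCat.{u} R) n).obj (op (ModuleCat.of R (R ⧸ I ^ t)))).obj M ⟶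
      (localCohomology I n).obj M :=
  have := hasColimitDiagram.{u, 0} (idealPowersDiagram I) n
  (colimit.ι (diagram (idealPowersDiagram I) n) (op (op t))).app M

/-- `ιLocalCohomology` in terms of `Abelian.Ext`. -/
def extToLocalCohomology (I : Ideal R) (M : ModuleCat.{u} R) (n t : ℕ) :
    Abelian.Ext (ModuleCat.of R (R ⧸ I ^ t)) M n →ₗ[R] (localCohomology I n).obj M :=
  (ιLocalCohomology I M n t).hom ∘ₗ
    (DerivedExt.extLinearEquiv R (ModuleCat.of R (R ⧸ I ^ t)) M n).symm.toLinearMap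

variable {I : Ideal R} {M : ModuleCat.{u} R} {n : ℕ}

theorem exists_ext_map_eq_zero_of_ιLocalCohomology_eq_zero {t : ℕ}
    {e : ((Ext R (ModuleCat.{u} R) n).obj (op (ModuleCat.of R (R ⧸ I ^ t)))).obj M}
    (he : ιLocalCohomology I M n t e = 0) :
    ∃ (s : ℕ) (h : t ≤ s),
      ((Ext R (ModuleCat.{u} R) n).map (quotientPowMap I h).op).app M e = 0 := by
  obtain ⟨k, f, hf⟩ := exists_map_eq_zero_of_isColimit (localCohomologyIsColimit I M n)
    (i := op (op t)) he
  exact ⟨k.unop.unop, leOfHom f.unop.unop, hf⟩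

theorem exists_extToLocalCohomology_eq (x : (localCohomology I n).obj M) :
    ∃ t e, extToLocalCohomology I M n t e = x := by
  obtain ⟨j, y, hy⟩ := Concrete.isColimit_exists_rep _ (localCohomologyIsColimit I M n) x
  exact ⟨j.unop.unop, DerivedExt.extLinearEquiv R _ M n y,
    (congr_arg _ (LinearEquiv.symm_apply_apply _ y)).trans hy⟩

theorem exists_mk₀_comp_eq_zero_of_extToLocalCohomology_eq_zero {t : ℕ}
    {e : Abelian.Ext (ModuleCat.of R (R ⧸ I ^ t)) M n} (he : extToLocalCohomology I M n t e = 0) :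
    ∃ (s : ℕ) (h : t ≤ s), (Ext.mk₀ (quotientPowMap I h)).comp e (zero_add n) = 0 := by
  obtain ⟨y, rfl⟩ := (DerivedExt.extLinearEquiv R _ M n).surjective e
  obtain ⟨s, hts, hs⟩ := exists_ext_map_eq_zero_of_ιLocalCohomology_eq_zero (e := y)
    ((congr_arg _ (LinearEquiv.symm_apply_apply _ y).symm).trans he)
  refine ⟨s, hts, ?_⟩
  rw [← DerivedExt.extLinearEquiv_map, hs, map_zero]

variable (I M n) in
theorem support_localCohomology_subset :
    Module.support R ((localCohomology I n).obj M) ⊆ PrimeSpectrum.zeroLocus I := by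
  intro p hp
  obtain ⟨x, hx⟩ := Module.mem_support_iff_exists_annihilator.1 hp
  obtain ⟨t, e, rfl⟩ := exists_extToLocalCohomology_eq x
  refine p.isPrime.le_of_pow_le (n := t) fun r hr ↦ hx ?_
  rw [Submodule.mem_annihilator_span_singleton, ← map_smul,
    smul_ext_eq_zero_of_mem_annihilator (by rwa [Ideal.annihilator_quotient]), map_zero]

theorem extToLocalCohomology_injective_of_isRegular [IsNoetherianRing R] [Module.Finite R M]
    (hM : I • (⊤ : Submodule R M) < ⊤) {rs : List R} (hrs : ∀ r ∈ rs, r ∈ I)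
    (hreg : IsRegular M rs) (t : ℕ) :
    Function.Injective (extToLocalCohomology I M rs.length t) := by
  refine (injective_iff_map_eq_zero _).2 fun e he ↦ ?_
  obtain ⟨s, hts, hs⟩ := exists_mk₀_comp_eq_zero_of_extToLocalCohomology_eq_zero he
  have hsupp : Module.support R (ModuleCat.of R (R ⧸ I ^ s)) ⊆ PrimeSpectrum.zeroLocus I := by
    rw [support_quotient_ideal]
    exact fun p hp ↦ p.isPrime.le_of_pow_le hp
  have : Epi (quotientPowMap I hts) :=
    (ModuleCat.epi_iff_surjective _).2 (Submodule.factor_surjective (Ideal.pow_le_pow_right hts))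
  exact (injective_iff_map_eq_zero _).1
    (precomp_mk₀_injective_of_isRegular hsupp (quotientPowMap I hts) hrs hM hreg) e hs

theorem isAssociatedPrime_localCohomology_length [IsNoetherianRing R] [Module.Finite R M]
    (hM : I • (⊤ : Submodule R M) < ⊤) {rs : List R} (hrs : ∀ r ∈ rs, r ∈ I)
    (hreg : IsRegular M rs) {p : Ideal R}
    (hp : IsAssociatedPrime p (M ⧸ Ideal.ofList rs • (⊤ : Submodule R M))) (hI : I ≤ p) :
    IsAssociatedPrime p ((localCohomology I rs.length).obj M) := by
  have h := isAssociatedPrime_ext_length (I := I ^ 1) rs (by simpa using hrs) M (by simpa using hM)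
    hreg hp (by simpa using hI)
  exact h.map_of_injective _ (extToLocalCohomology_injective_of_isRegular hM hrs hreg 1)

end LocalCohomology

section Ischebeck

open Abelian RingTheory.Sequence IsLocalRing

theorem subsingleton_ext_of_shortExact {C : Type*} [Category* C] [Abelian C] [HasExt.{v} C]
    {S : ShortComplex C} (hS : S.ShortExact) {Y : C} {n : ℕ}
    (h₁ : Subsingleton (Ext S.X₁ Y n)) (h₃ : Subsingleton (Ext S.X₃ Y n)) :
    Subsingleton (Ext S.X₂ Y n) := by
  refine subsingleton_of_forall_eq 0 fun x ↦ ?_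
  obtain ⟨y, rfl⟩ := Ext.contravariant_sequence_exact₂ hS Y x (Subsingleton.elim _ _)
  rw [Subsingleton.elim y 0, Ext.comp_zero]

theorem subsingleton_ext_of_subsingleton {R : Type u} [CommRing R] {M N : ModuleCat.{u} R}
    [Subsingleton N] {n : ℕ} : Subsingleton (Ext N M n) :=
  subsingleton_of_forall_eq 0 fun e ↦ by
    rw [← one_smul R e]
    have hann : (1 : R) ∈ Module.annihilator R N :=
      Module.mem_annihilator.2 fun _ ↦ Subsingleton.elim _ _
    exact smul_ext_eq_zero_of_mem_annihilator hann e

theorem subsingleton_ext_of_forall_equiv_quotient_prime {R : Type u} [CommRing R]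
    [IsNoetherianRing R] {M : ModuleCat.{u} R} {i : ℕ} {s : WithBot ℕ∞}
    (h : ∀ (N : ModuleCat.{u} R) [Module.Finite R N] (p : Ideal R) [p.IsPrime], (N ≃ₗ[R] R ⧸ p) →
      Module.supportDim R N < s → Subsingleton (Ext N M i))
    (N : Type u) [AddCommGroup N] [Module R N] (hN : Module.Finite R N)
    (hs : Module.supportDim R N < s) : Subsingleton (Ext (ModuleCat.of R N) M i) := by
  induction hN using IsNoetherianRing.induction_on_isQuotientEquivQuotientPrime R with
  | subsingleton N => exact subsingleton_ext_of_subsingleton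
  | quotient N p e => exact h (ModuleCat.of R N) p.1 e hs
  | exact N₁ N₂ N₃ f g hf hg hfg h₁ h₃ =>
    let S := ModuleCat.shortComplexOfCompEqZero f g hfg.linearMap_comp_eq_zero
    exact subsingleton_ext_of_shortExact (ModuleCat.shortComplex_shortExact S hfg hf hg)
      (h₁ ((Module.supportDim_le_of_injective f hf).trans_lt hs))
      (h₃ ((Module.supportDim_le_of_surjective g hg).trans_lt hs))

theorem isSMulRegular_of_equiv_quotient_prime {R N : Type*} [CommRing R] [AddCommGroup N]
    [Module R N] {p : Ideal R} [p.IsPrime] (e : N ≃ₗ[R] R ⧸ p) {x : R} (hx : x ∉ p) :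
    IsSMulRegular N x := by
  refine (e.isSMulRegular_congr x).2 (isSMulRegular_iff_right_eq_zero_of_smul.2 fun y hy ↦ ?_)
  obtain ⟨y, rfl⟩ := Ideal.Quotient.mk_surjective y
  rw [Ideal.Quotient.eq_zero_iff_mem]
  exact (‹p.IsPrime›.mem_or_mem (Ideal.Quotient.eq_zero_iff_mem.1 hy)).resolve_left hx

theorem mem_maximalIdeal_of_isRegular {R M : Type*} [CommRing R] [IsLocalRing R] [AddCommGroup M]
    [Module R M] {rs : List R} (h : IsRegular M rs) {r : R} (hr : r ∈ rs) :
    r ∈ maximalIdeal R := by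
  refine (mem_maximalIdeal r).2 fun hu ↦ h.2 ?_
  have hmem : r ∈ Ideal.ofList rs := Ideal.subset_span hr
  rw [Ideal.eq_top_of_isUnit_mem _ hmem hu, Submodule.top_smul]

theorem ideal_smul_top_lt_top {R M : Type*} [CommRing R] [IsLocalRing R] [AddCommGroup M]
    [Module R M] [Module.Finite R M] [Nontrivial M] {I : Ideal R} (hI : I ≠ ⊤) :
    I • (⊤ : Submodule R M) < ⊤ :=
  (Submodule.top_ne_ideal_smul_of_le_jacobson_annihilator
    ((le_maximalIdeal hI).trans (maximalIdeal_le_jacobson _))).symm.lt_top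

variable {R : Type u} [CommRing R] [IsNoetherianRing R] [IsLocalRing R] {M : ModuleCat.{u} R}
  [Module.Finite R M]

theorem subsingleton_ext_of_quotSMulTop {N : ModuleCat.{u} R} [Module.Finite R N] {x : R}
    (hx : x ∈ maximalIdeal R) (hreg : IsSMulRegular N x) {i : ℕ}
    (h : Subsingleton (Ext (ModuleCat.of R (QuotSMulTop x N)) M (i + 1))) :
    Subsingleton (Ext N M i) := by
  have hsmul (e : Ext N M i) : (Ext.mk₀ (x • 𝟙 N)).comp e (zero_add i) = x • e := by
    rw [Ext.mk₀_smul, Ext.smul_comp, Ext.mk₀_id_comp]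
  have hsurj (e : Ext N M i) : ∃ e' : Ext N M i, x • e' = e := by
    obtain ⟨e', he'⟩ := Ext.contravariant_sequence_exact₁ hreg.smulShortComplex_shortExact M e
      (add_comm 1 i) (h.elim _ _)
    exact ⟨e', (hsmul e').symm.trans he'⟩
  have htop : (⊤ : Submodule R (Ext N M i)) ≤ maximalIdeal R • ⊤ := fun e _ ↦ by
    obtain ⟨e', rfl⟩ := hsurj e
    exact Submodule.smul_mem_smul hx trivial
  have hbot := Submodule.eq_bot_of_le_smul_of_le_jacobson_bot _ _
    Module.Finite.fg_top htop (maximalIdeal_le_jacobson ⊥)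
  exact (Submodule.subsingleton_iff R).1 (subsingleton_of_top_le_bot hbot.le)

theorem subsingleton_ext_of_support_subset_maximalIdeal {N : ModuleCat.{u} R} [Module.Finite R N]
    (hN : Module.support R N ⊆ PrimeSpectrum.zeroLocus (maximalIdeal R))
    {rs : List R} (hrs : IsRegular M rs) {i : ℕ} (hi : i < rs.length) :
    Subsingleton (Ext N M i) :=
  have := hrs.nontrivial
  ModuleCat.subsingleton_ext_of_exists_isRegular (maximalIdeal R) N hN M
    (ideal_smul_top_lt_top Ideal.IsPrime.ne_top') rs
    (fun _ hr ↦ mem_maximalIdeal_of_isRegular hrs hr) hrs i hi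

theorem subsingleton_ext_of_equiv_quotient_prime {rs : List R} (hrs : IsRegular M rs) {i : ℕ}
    (hi : i < rs.length) {N : ModuleCat.{u} R} [Module.Finite R N] {p : Ideal R} [p.IsPrime]
    (e : N ≃ₗ[R] R ⧸ p)
    (h : ∀ (Q : ModuleCat.{u} R) [Module.Finite R Q],
      Module.supportDim R Q + 1 = Module.supportDim R N → Subsingleton (Ext Q M (i + 1))) :
    Subsingleton (Ext N M i) := by
  by_cases hp : maximalIdeal R ≤ p
  · refine subsingleton_ext_of_support_subset_maximalIdeal ?_ hrs hi
    rw [e.support_eq, support_quotient_ideal]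
    exact PrimeSpectrum.zeroLocus_anti_mono hp
  · obtain ⟨x, hx, hxp⟩ := Set.not_subset.1 hp
    have hreg := isSMulRegular_of_equiv_quotient_prime e hxp
    exact subsingleton_ext_of_quotSMulTop hx hreg
      (h _ (Module.supportDim_quotSMulTop_succ_eq_supportDim hreg hx))

theorem subsingleton_ext_of_supportDim_lt {rs : List R} (hrs : IsRegular M rs)
    (N : ModuleCat.{u} R) [Module.Finite R N] {r i : ℕ} (hN : Module.supportDim R N < r)
    (hi : i + r ≤ rs.length) : Subsingleton (Ext N M i) := by
  induction r generalizing N i with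
  | zero =>
    have : Subsingleton N := by
      by_contra h
      rw [not_subsingleton_iff_nontrivial, ← Module.supportDim_ne_bot_iff_nontrivial R] at h
      obtain ⟨k, hk⟩ := WithBot.ne_bot_iff_exists.1 h
      rw [← hk] at hN
      exact not_lt_bot (WithBot.coe_lt_coe.1 hN)
    exact subsingleton_ext_of_subsingleton
  | succ r ih =>
    refine subsingleton_ext_of_forall_equiv_quotient_prime (fun N _ p _ e hN ↦ ?_) N
      inferInstance hN
    refine subsingleton_ext_of_equiv_quotient_prime hrs (by lia) e fun Q _ hQ ↦ ?_
    refine ih Q ?_ (by lia)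
    rw [← hQ, Nat.cast_add_one] at hN
    exact lt_of_add_lt_add_right hN

end Ischebeck

section RegularSystem

open IsLocalRing RingTheory.Sequence

theorem supportDim_le_of_support_subset {R M N : Type*} [CommRing R] [AddCommGroup M] [Module R M]
    [AddCommGroup N] [Module R N] (h : Module.support R M ⊆ Module.support R N) :
    Module.supportDim R M ≤ Module.supportDim R N :=
  Order.krullDim_le_of_strictMono (Set.inclusion h) fun _ _ hab ↦ hab

theorem exists_isPrime_le_supportDim_quotient {R : Type*} [CommRing R] {J : Ideal R} {n : ℕ}
    (h : n ≤ Module.supportDim R (R ⧸ J)) :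
    ∃ P : Ideal R, P.IsPrime ∧ J ≤ P ∧ n ≤ Module.supportDim R (R ⧸ P) := by
  obtain ⟨l, rfl⟩ := Order.le_krullDim_iff.1 h
  refine ⟨l.head.1.asIdeal, inferInstance, ?_, Order.le_krullDim_iff.2
    ⟨⟨l.length, fun i ↦ ⟨(l i).1, ?_⟩, l.step⟩, rfl⟩⟩
  · simpa only [support_quotient_ideal] using! l.head.2
  · rw [support_quotient_ideal]
    exact l.head_le i

theorem eq_of_le_supportDim_quotient {R : Type*} [CommRing R] {p J : Ideal R} [p.IsPrime]
    (hle : p ≤ J) {n : ℕ} (hp : Module.supportDim R (R ⧸ p) ≤ n)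
    (hJ : n ≤ Module.supportDim R (R ⧸ J)) : J = p := by
  refine hle.antisymm' fun x hx ↦ by_contra fun hxp ↦ ?_
  have hnotMem : ∀ q ∈ (Module.annihilator R (R ⧸ p)).minimalPrimes, x ∉ q := by
    rw [Ideal.annihilator_quotient, Ideal.minimalPrimes_eq_subsingleton_self]
    rintro q rfl
    exact hxp
  have hsub : Module.support R (R ⧸ J) ⊆ Module.support R (QuotSMulTop x (R ⧸ p)) := by
    rw [Module.support_quotSMulTop, support_quotient_ideal, support_quotient_ideal]
    exact fun q hq ↦ ⟨hle.trans hq, Set.singleton_subset_iff.2 (hq hx)⟩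
  have hlt : (n : WithBot ℕ∞) + 1 ≤ n :=
    calc (n : WithBot ℕ∞) + 1
      _ ≤ Module.supportDim R (QuotSMulTop x (R ⧸ p)) + 1 := by
        gcongr
        exact hJ.trans (supportDim_le_of_support_subset hsub)
      _ ≤ Module.supportDim R (R ⧸ p) :=
        Module.supportDim_quotSMulTop_succ_le_of_notMem_minimalPrimes hnotMem
      _ ≤ n := hp
  exact absurd hlt (by exact_mod_cast Nat.not_succ_le_self n)

/-- The isomorphism `(R ⧸ J) ⧸ y (R ⧸ J) ≃ R ⧸ (J + (y))`. -/
def quotSMulTopQuotientEquiv {R : Type*} [CommRing R] (J : Ideal R) (y : R) :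
    QuotSMulTop y (R ⧸ J) ≃ₗ[R] R ⧸ (J ⊔ Ideal.span {y}) :=
  Submodule.quotEquivOfEq _ _ (by
    rw [← Submodule.ideal_span_singleton_smul, ← Submodule.range_mkQ J, LinearMap.range_eq_map,
      ← Submodule.map_smul'', smul_eq_mul, Ideal.mul_top]) ≪≫ₗ
    Submodule.quotientQuotientEquivQuotientSup J (Ideal.span {y})

variable {R : Type*} [CommRing R] [IsNoetherianRing R] [IsLocalRing R]

theorem supportDim_quotient_le_supportDim_quotient_sup_span_succ (J : Ideal R) {y : R}
    (hy : y ∈ maximalIdeal R) :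
    Module.supportDim R (R ⧸ J) ≤ Module.supportDim R (R ⧸ (J ⊔ Ideal.span {y})) + 1 := by
  rw [← Module.supportDim_eq_of_equiv (quotSMulTopQuotientEquiv J y)]
  exact Module.supportDim_le_supportDim_quotSMulTop_succ hy

theorem supportDim_quotient_le_length {J : Ideal R} {rs : List R}
    (h : J ⊔ Ideal.ofList rs = maximalIdeal R) :
    Module.supportDim R (R ⧸ J) ≤ rs.length := by
  induction rs generalizing J with
  | nil =>
    rw [Ideal.ofList_nil, sup_bot_eq] at h
    subst h
    let := Ideal.Quotient.field (maximalIdeal R)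
    rw [Module.supportDim_quotient_eq_ringKrullDim, ringKrullDim_eq_zero_of_field]
    rfl
  | cons y rs ih =>
    rw [Ideal.ofList_cons, ← sup_assoc] at h
    have hy : y ∈ maximalIdeal R :=
      h ▸ Ideal.mem_sup_left (Ideal.mem_sup_right (Ideal.mem_span_singleton_self y))
    refine (supportDim_quotient_le_supportDim_quotient_sup_span_succ J hy).trans ?_
    rw [List.length_cons, Nat.cast_add_one]
    gcongr
    exact ih h

theorem prime_le_of_le_sup_span_singleton {P J : Ideal R} [P.IsPrime] {y : R}
    (hy : y ∈ maximalIdeal R) (hyP : y ∉ P) (hJP : J ≤ P) (h : P ≤ J ⊔ Ideal.span {y}) :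
    P ≤ J := by
  refine Submodule.le_of_le_smul_of_le_jacobson_bot (I := maximalIdeal R)
    (IsNoetherian.noetherian P) (maximalIdeal_le_jacobson ⊥) fun b hb ↦ ?_
  obtain ⟨j, hj, z, hz, rfl⟩ := Submodule.mem_sup.1 (h hb)
  obtain ⟨c, rfl⟩ := Ideal.mem_span_singleton'.1 hz
  have hcy : c * y ∈ P := (Submodule.add_mem_iff_right P (hJP hj)).1 hb
  have hc : c ∈ P := (‹P.IsPrime›.mem_or_mem hcy).resolve_right hyP
  rw [mul_comm c y]
  exact Submodule.add_mem_sup hj (Submodule.smul_mem_smul hy hc)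

theorem notMem_of_length_succ_le_supportDim_quotient {J : Ideal R} {y : R} {rs : List R}
    (h : J ⊔ Ideal.span {y} ⊔ Ideal.ofList rs = maximalIdeal R)
    (hdim : (rs.length : WithBot ℕ∞) + 1 ≤ Module.supportDim R (R ⧸ J)) : y ∉ J := fun hy ↦ by
  rw [sup_eq_left.2 ((Ideal.span_singleton_le_iff_mem J).2 hy)] at h
  exact absurd (hdim.trans (supportDim_quotient_le_length h))
    (by exact_mod_cast Nat.not_succ_le_self rs.length)

theorem isPrime_and_isWeaklyRegular_of_length_le_supportDim {J : Ideal R} {rs : List R}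
    (h : J ⊔ Ideal.ofList rs = maximalIdeal R)
    (hdim : rs.length ≤ Module.supportDim R (R ⧸ J)) :
    J.IsPrime ∧ IsWeaklyRegular (R ⧸ J) rs := by
  induction rs generalizing J with
  | nil =>
    rw [Ideal.ofList_nil, sup_bot_eq] at h
    exact ⟨h ▸ inferInstance, .nil R _⟩
  | cons y rs ih =>
    -- Choose a prime `P ⊇ J` with `dim R/P` at least the length. By induction `J + (y)` is prime,
    -- so it equals `P + (y)`, whose quotient has no smaller dimension; then `P = J` by Nakayama.
    obtain ⟨P, hP, hJP, hPdim⟩ := exists_isPrime_le_supportDim_quotient hdim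
    rw [List.length_cons, Nat.cast_add_one] at hdim hPdim
    rw [Ideal.ofList_cons, ← sup_assoc] at h
    have hPm : P ≤ maximalIdeal R := le_maximalIdeal hP.ne_top
    have hy : y ∈ maximalIdeal R :=
      h ▸ Ideal.mem_sup_left (Ideal.mem_sup_right (Ideal.mem_span_singleton_self y))
    have hdim_succ {K : Ideal R} (hK : (rs.length : WithBot ℕ∞) + 1 ≤ Module.supportDim R (R ⧸ K)) :
        rs.length ≤ Module.supportDim R (R ⧸ (K ⊔ Ideal.span {y})) :=
      ENat.WithBot.add_le_add_one_right_iff.1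
        (hK.trans (supportDim_quotient_le_supportDim_quotient_sup_span_succ K hy))
    have hPrs : P ⊔ Ideal.span {y} ⊔ Ideal.ofList rs = maximalIdeal R := by
      refine le_antisymm (sup_le (sup_le hPm ?_) (h ▸ le_sup_right)) (h.ge.trans ?_)
      · exact (Ideal.span_singleton_le_iff_mem _).2 hy
      · gcongr
    have hyP : y ∉ P := notMem_of_length_succ_le_supportDim_quotient hPrs hPdim
    obtain ⟨hprime, hreg⟩ := ih h (hdim_succ hdim)
    have hsup : P ⊔ Ideal.span {y} = J ⊔ Ideal.span {y} :=
      eq_of_le_supportDim_quotient (sup_le_sup_right hJP _) (supportDim_quotient_le_length h)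
        (hdim_succ hPdim)
    obtain rfl : P = J :=
      (prime_le_of_le_sup_span_singleton hy hyP hJP (hsup ▸ le_sup_left)).antisymm hJP
    refine ⟨hP, (isWeaklyRegular_cons_iff _ y rs).2
      ⟨isSMulRegular_of_equiv_quotient_prime (.refl R (R ⧸ P)) hyP, ?_⟩⟩
    exact ((quotSMulTopQuotientEquiv P y).isWeaklyRegular_congr rs).2 hreg

theorem isRegular_of_ofList_eq_maximalIdeal {rs : List R} (h : Ideal.ofList rs = maximalIdeal R)
    (hdim : rs.length ≤ ringKrullDim R) : IsRegular R rs := by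
  let e := Submodule.quotEquivOfEqBot (⊥ : Ideal R) rfl
  rw [← Module.supportDim_self_eq_ringKrullDim, ← Module.supportDim_eq_of_equiv e] at hdim
  have hreg := (isPrime_and_isWeaklyRegular_of_length_le_supportDim
    (bot_sup_eq (Ideal.ofList rs) |>.trans h) hdim).2
  refine ⟨(e.isWeaklyRegular_congr rs).1 hreg, ?_⟩
  rw [h, smul_eq_mul, Ideal.mul_top]
  exact (Ideal.IsPrime.ne_top' (I := maximalIdeal R)).symm

end RegularSystem

section CohenMacaulay

open Abelian IsLocalRing RingTheory.Sequence

theorem coe_height_add_supportDim_quotient_le_ringKrullDim {R : Type*} [CommRing R] (I : Ideal R) :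
    I.height + Module.supportDim R (R ⧸ I) ≤ ringKrullDim R := by
  rw [Module.supportDim, support_quotient_ideal, Order.krullDim_eq_iSup_coheight]
  cases isEmpty_or_nonempty (PrimeSpectrum.zeroLocus (I : Set R)) with
  | inl h => simp
  | inr h =>
    have : Nonempty (PrimeSpectrum R) := h.map Subtype.val
    rw [← WithBot.coe_iSup (OrderTop.bddAbove _), ← WithBot.coe_add, ENat.add_iSup, ringKrullDim,
      Order.krullDim_eq_iSup_height_add_coheight_of_nonempty, WithBot.coe_le_coe]
    refine iSup_le fun q ↦ le_iSup_of_le q.1 (add_le_add ?_ ?_)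
    · rw [← PrimeSpectrum.height_eq_orderHeight]
      exact Ideal.height_mono q.2
    · exact Order.coheight_le_coheight_apply_of_strictMono _ (Subtype.strictMono_coe _) q

theorem add_le_of_height_eq_of_supportDim_quotient_eq {R : Type*} [CommRing R] {I : Ideal R}
    {n d k : ℕ} (hdim : ringKrullDim R = n) (hd : I.height = d)
    (hk : Module.supportDim R (R ⧸ I) = k) : d + k ≤ n := by
  have h := coe_height_add_supportDim_quotient_le_ringKrullDim I
  rw [hd, hk, hdim] at h
  exact_mod_cast h

theorem length_le_height_of_isWeaklyRegular {R : Type*} [CommRing R] [IsNoetherianRing R]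
    {rs : List R} (h : IsWeaklyRegular R rs) : rs.length ≤ (Ideal.ofList rs).height := by
  rw [Ideal.height_eq_inf_minimalPrimes]
  refine le_iInf₂ fun q hq ↦ ?_
  have := hq.isPrime
  let Rq := Localization.AtPrime q
  have hreg : IsRegular Rq (rs.map (algebraMap R Rq)) :=
    h.isRegular_of_isLocalization_of_mem Rq q fun r hr ↦ hq.1.2 (Ideal.subset_span hr)
  have hdim := ringKrullDim_add_length_eq_ringKrullDim_of_isRegular _ hreg
  rw [List.length_map, IsLocalization.AtPrime.ringKrullDim_eq_height q Rq] at hdim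
  have : Nontrivial (Rq ⧸ Ideal.ofList (rs.map (algebraMap R Rq))) := by
    rw [Ideal.Quotient.nontrivial_iff]
    intro htop
    exact hreg.2 (by rw [htop, Submodule.top_smul])
  have hle : (rs.length : WithBot ℕ∞) ≤ q.height :=
    hdim ▸ le_add_of_nonneg_left ringKrullDim_nonneg_of_nontrivial
  exact_mod_cast hle

variable {R : Type u} [CommRing R] [IsNoetherianRing R]

theorem isAssociatedPrime_quotient_ofList {rs : List R} (h : IsWeaklyRegular R rs) {p : Ideal R}
    [p.IsPrime] (hle : Ideal.ofList rs ≤ p) (hp : p.height ≤ rs.length) :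
    IsAssociatedPrime p (R ⧸ Ideal.ofList rs • (⊤ : Ideal R)) := by
  refine Module.associatedPrimes.minimalPrimes_annihilator_subset_associatedPrimes R _ ?_
  rw [smul_eq_mul, Ideal.mul_top, Ideal.annihilator_quotient]
  exact Ideal.mem_minimalPrimes_of_height_le hle (hp.trans (length_le_height_of_isWeaklyRegular h))

variable [IsLocalRing R] {I : Ideal R} {rs : List R}

theorem exists_supportDim_quotient_eq_natCast (hI : I ≠ ⊤) :
    ∃ k : ℕ, Module.supportDim R (R ⧸ I) = k := by
  have := Ideal.Quotient.nontrivial_iff.2 hI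
  have : IsLocalRing (R ⧸ I) := .of_surjective' _ Ideal.Quotient.mk_surjective
  rw [Module.supportDim_quotient_eq_ringKrullDim]
  exact ⟨_, Order.krullDim_eq_length_of_finiteDimensionalOrder⟩

theorem exists_isRegular_length_eq_height (hrs : IsRegular R rs) (hdim : ringKrullDim R = rs.length)
    (hI : I ≠ ⊤) {d : ℕ} (hd : I.height = d) :
    ∃ xs : List R, xs.length = d ∧ (∀ x ∈ xs, x ∈ I) ∧ IsRegular R xs := by
  obtain ⟨k, hk⟩ := exists_supportDim_quotient_eq_natCast hI
  have hadd := add_le_of_height_eq_of_supportDim_quotient_eq hdim hd hk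
  refine ModuleCat.exists_isRegular_of_exists_subsingleton_ext I d (ModuleCat.of R R)
    (ideal_smul_top_lt_top hI) (ModuleCat.of R (R ⧸ I)) (support_quotient_ideal I) fun i hi ↦
    subsingleton_ext_of_supportDim_lt hrs _ (r := k + 1) ?_ (by lia)
  rw [hk]
  exact_mod_cast k.lt_succ_self

theorem length_le_add_of_height_eq_of_supportDim_quotient_eq (hrs : IsRegular R rs)
    (hdim : ringKrullDim R = rs.length) {p : Ideal R} [p.IsPrime] {d k : ℕ} (hd : p.height = d)
    (hk : Module.supportDim R (R ⧸ p) = k) : rs.length ≤ d + k := by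
  have hp : p ≠ ⊤ := Ideal.IsPrime.ne_top ‹_›
  obtain ⟨xs, rfl, hxs, hreg⟩ := exists_isRegular_length_eq_height hrs hdim hp hd
  have hass := isAssociatedPrime_ext_length xs hxs (ModuleCat.of R R) (ideal_smul_top_lt_top hp)
    hreg (isAssociatedPrime_quotient_ofList hreg.1 (Ideal.span_le.2 hxs) hd.le) le_rfl
  by_contra! hlt
  have : Subsingleton (Ext (ModuleCat.of R (R ⧸ p)) (ModuleCat.of R R) xs.length) :=
    subsingleton_ext_of_supportDim_lt hrs _ (r := k + 1) (by rw [hk]; exact_mod_cast k.lt_succ_self)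
      (by lia)
  exact not_isAssociatedPrime_of_subsingleton hass

end CohenMacaulay

open Abelian RingTheory.Sequence in
theorem stmt6_general {R : Type u} [CommRing R] [IsNoetherianRing R] [IsLocalRing R] {rs : List R}
    (hrs : IsRegular R rs) (hdim : ringKrullDim R = rs.length) {I : Ideal R} (hI : I ≠ ⊤) {d : ℕ}
    (hd : I.height = d) :
    Module.supportDim R ((localCohomology I d).obj (ModuleCat.of R R)) = (rs.length - d : ℕ) := by
  obtain ⟨xs, rfl, hxs, hreg⟩ := exists_isRegular_length_eq_height hrs hdim hI hd
  apply le_antisymm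
  · obtain ⟨k, hk⟩ := exists_supportDim_quotient_eq_natCast hI
    have hadd := add_le_of_height_eq_of_supportDim_quotient_eq hdim hd hk
    calc Module.supportDim R ((localCohomology I xs.length).obj (ModuleCat.of R R))
      _ ≤ Module.supportDim R (R ⧸ I) := supportDim_le_of_support_subset <|
        (support_localCohomology_subset I _ _).trans (support_quotient_ideal I).ge
      _ = k := hk
      _ ≤ (rs.length - xs.length : ℕ) := by exact_mod_cast Nat.le_sub_of_add_le' hadd
  · obtain ⟨p, hp, hIp, hpd⟩ := Ideal.exists_isPrime_height_eq hd
    obtain ⟨k, hk⟩ := exists_supportDim_quotient_eq_natCast hp.ne_top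
    have hadd := length_le_add_of_height_eq_of_supportDim_quotient_eq hrs hdim hpd hk
    have hass := isAssociatedPrime_localCohomology_length (M := ModuleCat.of R R)
      (ideal_smul_top_lt_top hI) hxs hreg (isAssociatedPrime_quotient_ofList hreg.1
        ((Ideal.span_le.2 hxs).trans hIp) hpd.le) hIp
    obtain ⟨-, f, hf⟩ := (isAssociatedPrime_iff_exists_injective_linearMap p _).1 hass
    calc ((rs.length - xs.length : ℕ) : WithBot ℕ∞)
      _ ≤ k := by exact_mod_cast Nat.sub_le_iff_le_add'.2 hadd
      _ = Module.supportDim R (R ⧸ p) := hk.symm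
      _ ≤ Module.supportDim R ((localCohomology I xs.length).obj (ModuleCat.of R R)) :=
        Module.supportDim_le_of_injective f hf

theorem idealHeight_eq_height {R : Type} [CommRing R] (I : Ideal R) :
    idealHeight R I = I.height := by
  refine le_antisymm ?_ (le_sInf ?_)
  · rw [I.height_eq_inf_minimalPrimes]
    exact le_iInf₂ fun q hq ↦ sInf_le
      ⟨⟨q, hq.isPrime⟩, hq.1.2, (PrimeSpectrum.height_eq_orderHeight _).symm⟩
  · rintro _ ⟨p, hp, rfl⟩
    rw [← PrimeSpectrum.height_eq_orderHeight]
    exact Ideal.height_mono hp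

theorem exists_isRegular_length_eq_ringKrullDim {R : Type} [CommRing R] [IsLocalRing R]
    (hreg : IsRegularLocal R) :
    ∃ rs : List R, RingTheory.Sequence.IsRegular R rs ∧ ringKrullDim R = rs.length := by
  obtain ⟨hnoeth, s, hs, hcard⟩ := hreg
  have hspan : Ideal.ofList s.toList = IsLocalRing.maximalIdeal R := by
    rw [← hs]
    simp [Ideal.ofList]
  have hlength : ringKrullDim R = s.toList.length := by rw [Finset.length_toList, hcard]
  exact ⟨s.toList, isRegular_of_ofList_eq_maximalIdeal hspan hlength.ge, hlength⟩

end

/-- Regular local ring `R` of dimension `n` containing a field, `I` a proper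
ideal of height `d`.  Then `dim H_I^d(R) = n - d`. -/
theorem stmt6 (R : Type) [CommRing R] [IsLocalRing R]
    (hreg : IsRegularLocal R) (hfield : ContainsField R)
    (n : ℕ) (hdim : ringKrullDim R = (n : WithBot ℕ∞))
    (I : Ideal R) (hI : I ≠ ⊤) (d : ℕ) (hht : idealHeight R I = (d : ℕ∞)) :
    moduleSuppDim R (LocalCohomologyMod R I d) = ((n - d : ℕ) : WithBot ℕ∞) := by
  have := hreg.1
  obtain ⟨rs, hrs, hlength⟩ := exists_isRegular_length_eq_ringKrullDim hreg
  obtain rfl : rs.length = n := by exact_mod_cast hlength.symm.trans hdim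
  exact stmt6_general hrs hlength hI ((idealHeight_eq_height I).symm.trans hht)
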